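/- For the auxiliary reverse process, the function Δ_T(x) := p_{X_T^GMM}(x) − p_{Ȳ_T}(x) satisfies ∫_{ℝ^d} Δ_T(x) dx ≤ C T^{−3} for some absolute constant C > 0. -/

import Mathlib

open MeasureTheory Real Finset
open scoped RealInnerProductSpace BigOperators

noncomputable section

/-- Density of the Gaussian distribution `N(m, v I_d)` on `ℝ^d`. -/
def gaussV (d : ℕ) (v : ℝ) (m x : EuclideanSpace ℝ (Fin d)) : ℝ :=
  (2 * Real.pi * v) ^ (-(d : ℝ) / 2) * Real.exp (-‖x - m‖ ^ 2 / (2 * v))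

/-- Density of the Gaussian mixture `∑_k w_k N(√abar μ_k, I_d)`. -/
def mixDensity (d K : ℕ) (w : Fin K → ℝ) (μ : Fin K → EuclideanSpace ℝ (Fin d))
    (abar : ℝ) (x : EuclideanSpace ℝ (Fin d)) : ℝ :=
  ∑ k, w k * gaussV d 1 (Real.sqrt abar • μ k) x

/-- Posterior component weights `π_k^{(t)}(x)`. -/
def postWeight (d K : ℕ) (w : Fin K → ℝ) (μ : Fin K → EuclideanSpace ℝ (Fin d))
    (abar : ℝ) (k : Fin K) (x : EuclideanSpace ℝ (Fin d)) : ℝ :=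
  w k * Real.exp (-‖x - Real.sqrt abar • μ k‖ ^ 2 / 2) /
    ∑ i, w i * Real.exp (-‖x - Real.sqrt abar • μ i‖ ^ 2 / 2)

/-- Closed form of the score `∇ log p_{X_t^GMM}` of the diffused GMM. -/
def gmmScore (d K : ℕ) (w : Fin K → ℝ) (μ : Fin K → EuclideanSpace ℝ (Fin d))
    (abar : ℝ) (x : EuclideanSpace ℝ (Fin d)) : EuclideanSpace ℝ (Fin d) :=
  -x + Real.sqrt abar • ∑ k, postWeight d K w μ abar k x • μ k

/-- The Jacobian matrix `J_t(x)` of the diffused GMM score. -/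
def gmmJac (d K : ℕ) (w : Fin K → ℝ) (μ : Fin K → EuclideanSpace ℝ (Fin d))
    (abar : ℝ) (x : EuclideanSpace ℝ (Fin d)) : Matrix (Fin d) (Fin d) ℝ :=
  Matrix.of fun i j =>
    (if i = j then (-1 : ℝ) else 0) +
      abar * ((∑ k, postWeight d K w μ abar k x * (μ k i * μ k j)) -
        (∑ k, postWeight d K w μ abar k x * μ k i) *
          (∑ k, postWeight d K w μ abar k x * μ k j))

/-- The quantity `ζ_k^{(t)}(x)`, where `abar` plays the role of `ᾱ_t` and `a` that of `α_t`. -/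
def zeta (d K : ℕ) (w : Fin K → ℝ) (μ : Fin K → EuclideanSpace ℝ (Fin d))
    (abar a : ℝ) (k : Fin K) (x : EuclideanSpace ℝ (Fin d)) : ℝ :=
  (1 - a ^ 2) / (2 * a ^ 2) *
      (‖x - Real.sqrt abar • μ k‖ ^ 2 -
        ∑ i, postWeight d K w μ abar i x * ‖x - Real.sqrt abar • μ i‖ ^ 2) +
    (1 - a) / a ^ 2 *
      ⟪gmmScore d K w μ abar x,
        ∑ i, postWeight d K w μ abar i x • (Real.sqrt abar • (μ i - μ k))⟫

/-- The typical set `E_t`. -/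
def Eset (d K T : ℕ) (w : Fin K → ℝ) (μ : Fin K → EuclideanSpace ℝ (Fin d))
    (abar a C₁ C₂ : ℝ) : Set (EuclideanSpace ℝ (Fin d)) :=
  {x | Matrix.trace (1 + gmmJac d K w μ abar x) ≤ C₁ * Real.log ((K : ℝ) * T) ∧
    ∑ k, postWeight d K w μ abar k x * Real.exp (-(zeta d K w μ abar a k x)) ≤
      Real.exp (C₂ * (1 - a) ^ 2 * Real.log ((K : ℝ) * T) ^ 2)}

/-- The set `A_t`. -/
def Aset (d K T : ℕ) (w : Fin K → ℝ) (μ : Fin K → EuclideanSpace ℝ (Fin d))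
    (abar cR C₇ : ℝ) : Set (EuclideanSpace ℝ (Fin d)) :=
  {x | -(C₇ * d * Real.log ((d : ℝ) * T)) ≤ Real.log (mixDensity d K w μ abar x) ∧
    ‖x‖ ≤ Real.sqrt (2 * (T : ℝ) ^ (2 * cR) + 16 * d * Real.log T)}

/-- The set `T_k`. -/
def Tset (d K T : ℕ) (μ : Fin K → EuclideanSpace ℝ (Fin d))
    (abar C₅ : ℝ) (k : Fin K) : Set (EuclideanSpace ℝ (Fin d)) :=
  {x | ∀ i : Fin K,
    |⟪x - Real.sqrt abar • μ k, Real.sqrt abar • (μ i - μ k)⟫| ≤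
      C₅ * Real.sqrt (abar * Real.log ((K : ℝ) * T)) * ‖μ i - μ k‖}

/-- Forward (diffused) marginal density at noise level `abar`, starting from density `f₀`. -/
def fwdDensity (d : ℕ) (f₀ : EuclideanSpace ℝ (Fin d) → ℝ) (abar : ℝ)
    (x : EuclideanSpace ℝ (Fin d)) : ℝ :=
  ∫ y, gaussV d (1 - abar) (Real.sqrt abar • y) x * f₀ y

/-- Stein score of a density `p`. -/
def scoreOf (d : ℕ) (p : EuclideanSpace ℝ (Fin d) → ℝ)
    (x : EuclideanSpace ℝ (Fin d)) : EuclideanSpace ℝ (Fin d) :=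
  gradient (fun y => Real.log (p y)) x

/-- Truncation (clipping) of a score estimate at radius `R`. -/
def clipFn (d : ℕ) (R : ℝ) (s : EuclideanSpace ℝ (Fin d) → EuclideanSpace ℝ (Fin d))
    (x : EuclideanSpace ℝ (Fin d)) : EuclideanSpace ℝ (Fin d) :=
  if ‖s x‖ ≤ R then s x else 0

/-- Total-variation distance between two densities on `ℝ^d`. -/
def tvDist (d : ℕ) (p q : EuclideanSpace ℝ (Fin d) → ℝ) : ℝ :=
  (1 / 2) * ∫ x, |p x - q x|

/-- Density of the one-step (DDPM-type) reverse Gaussian transition with rate `a`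
and drift field `s`, from `y` to `x`. -/
def ddpmKernel (d : ℕ) (a : ℝ) (s : EuclideanSpace ℝ (Fin d) → EuclideanSpace ℝ (Fin d))
    (y x : EuclideanSpace ℝ (Fin d)) : ℝ :=
  gaussV d (1 - a) ((Real.sqrt a)⁻¹ • (y + (1 - a) • s y)) x

/-- Density of `Y_{T-n}` for the DDPM sampler run with rates `α` and score estimates `s`. -/
def ddpmDensity (d T : ℕ) (α : ℕ → ℝ)
    (s : ℕ → EuclideanSpace ℝ (Fin d) → EuclideanSpace ℝ (Fin d)) :
    ℕ → EuclideanSpace ℝ (Fin d) → ℝ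
  | 0 => gaussV d 1 0
  | n + 1 => fun x =>
      ∫ y, ddpmKernel d (α (T - n)) (s (T - n)) y x * ddpmDensity d T α s n y

/-- Density (on `ℝ^d`) of `Ȳ_{T-n}^-` for the auxiliary reverse process. -/
def pbarMinus (d K T : ℕ) (w : Fin K → ℝ) (μ : Fin K → EuclideanSpace ℝ (Fin d))
    (αbar α : ℕ → ℝ) (C₁ C₂ : ℝ) : ℕ → EuclideanSpace ℝ (Fin d) → ℝ
  | 0 => (Eset d K T w μ (αbar T) (α T) C₁ C₂).indicator (gaussV d 1 0)
  | n + 1 =>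
      (Eset d K T w μ (αbar (T - n)) (α (T - n)) C₁ C₂).indicator fun x =>
        ∫ y in Eset d K T w μ (αbar (T - n)) (α (T - n)) C₁ C₂,
          ddpmKernel d (α (T - n)) (gmmScore d K w μ (αbar (T - n))) y x *
            min (mixDensity d K w μ (αbar (T - n)) y)
              (pbarMinus d K T w μ αbar α C₁ C₂ n y)

/-- The function `Δ_t(x) = p_{X_t^GMM}(x) - p_{Ȳ_t}(x)`. -/
def DeltaFn (d K T : ℕ) (w : Fin K → ℝ) (μ : Fin K → EuclideanSpace ℝ (Fin d))
    (αbar α : ℕ → ℝ) (C₁ C₂ : ℝ) (t : ℕ) (x : EuclideanSpace ℝ (Fin d)) : ℝ :=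
  mixDensity d K w μ (αbar t) x -
    min (mixDensity d K w μ (αbar t) x) (pbarMinus d K T w μ αbar α C₁ C₂ (T - t) x)

end

/-!
With `m k = √ᾱ_T • μ k`, the means of `p_{X_T}` have norm at most `r = T⁻³`, so `p_{X_T}` is almost
the standard Gaussian `φ` from which the reverse process starts. If every projection `⟪x, m k⟫` has
absolute value at most `4 r log (K T)`, then `x ∈ E_T`, and there `Δ_T = (p_{X_T} - φ)⁺` is
dominated by the mixture of the `φ_{m k} |⟪·, m k⟫|`, whose integral is `O(r)`. Off that
intersection of slabs `Δ_T ≤ p_{X_T}`, and a Chernoff bound gives it mass `O(K (K T)⁻⁴)`. Both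
estimates reduce to the integral of `φ_m` against `x ↦ cosh ⟪x, u⟫`.
-/

section Gaussian

variable {d : ℕ} {v : ℝ}

lemma gaussV_nonneg (hv : 0 ≤ v) (m x : EuclideanSpace ℝ (Fin d)) : 0 ≤ gaussV d v m x := by
  unfold gaussV
  positivity

lemma integral_gaussV (hv : 0 < v) (m : EuclideanSpace ℝ (Fin d)) : ∫ x, gaussV d v m x = 1 := by
  have h_translate : ∫ x : EuclideanSpace ℝ (Fin d), exp (-‖x - m‖ ^ 2 / (2 * v)) =
      ∫ x : EuclideanSpace ℝ (Fin d), exp (-(2 * v)⁻¹ * ‖x‖ ^ 2) := by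
    rw [← integral_sub_right_eq_self (fun x => exp (-(2 * v)⁻¹ * ‖x‖ ^ 2)) m]
    refine integral_congr_ae (.of_forall fun x => ?_)
    simp only [div_eq_inv_mul, neg_mul, mul_neg]
  unfold gaussV
  rw [integral_const_mul, h_translate,
    GaussianFourier.integral_rexp_neg_mul_sq_norm (by positivity), finrank_euclideanSpace_fin,
    show π / (2 * v)⁻¹ = 2 * π * v by field_simp, ← rpow_add (by positivity), neg_div,
    neg_add_cancel, rpow_zero]

lemma integrable_gaussV (hv : 0 < v) (m : EuclideanSpace ℝ (Fin d)) : Integrable (gaussV d v m) :=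
  integrable_of_integral_eq_one (integral_gaussV hv m)

lemma gaussV_mul_exp_inner (hv : v ≠ 0) (m u x : EuclideanSpace ℝ (Fin d)) :
    gaussV d v m x * exp ⟪x, u⟫ =
      exp (⟪m, u⟫ + v * ‖u‖ ^ 2 / 2) * gaussV d v (m + v • u) x := by
  have h_square : -‖x - m‖ ^ 2 / (2 * v) + ⟪x, u⟫ =
      ⟪m, u⟫ + v * ‖u‖ ^ 2 / 2 + -‖x - (m + v • u)‖ ^ 2 / (2 * v) := by
    rw [← sub_sub, norm_sub_sq_real (x - m), inner_smul_right, inner_sub_left, norm_smul, mul_pow,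
      norm_eq_abs, sq_abs]
    field_simp
    ring
  unfold gaussV
  rw [mul_assoc, ← exp_add, h_square, exp_add]
  ring

lemma gaussV_mul_cosh_inner (hv : v ≠ 0) (m u x : EuclideanSpace ℝ (Fin d)) :
    gaussV d v m x * cosh ⟪x, u⟫ =
      exp (⟪m, u⟫ + v * ‖u‖ ^ 2 / 2) / 2 * gaussV d v (m + v • u) x +
        exp (⟪m, -u⟫ + v * ‖-u‖ ^ 2 / 2) / 2 * gaussV d v (m + v • -u) x := by
  have h_pos := gaussV_mul_exp_inner hv m u x
  have h_neg := gaussV_mul_exp_inner hv m (-u) x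
  rw [inner_neg_right x u] at h_neg
  rw [cosh_eq]
  linarith

lemma integrable_gaussV_mul_cosh_inner (hv : 0 < v) (m u : EuclideanSpace ℝ (Fin d)) :
    Integrable fun x => gaussV d v m x * cosh ⟪x, u⟫ := by
  simp_rw [gaussV_mul_cosh_inner hv.ne']
  exact ((integrable_gaussV hv _).const_mul _).add ((integrable_gaussV hv _).const_mul _)

lemma integral_gaussV_mul_cosh_inner (hv : 0 < v) (m u : EuclideanSpace ℝ (Fin d)) :
    ∫ x, gaussV d v m x * cosh ⟪x, u⟫ = exp (v * ‖u‖ ^ 2 / 2) * cosh ⟪m, u⟫ := by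
  simp_rw [gaussV_mul_cosh_inner hv.ne']
  rw [integral_add ((integrable_gaussV hv _).const_mul _) ((integrable_gaussV hv _).const_mul _),
    integral_const_mul, integral_const_mul, integral_gaussV hv, integral_gaussV hv,
    inner_neg_right, norm_neg, exp_add, exp_add, cosh_eq]
  ring

lemma integral_gaussV_one_mul_cosh_inner_le {m u : EuclideanSpace ℝ (Fin d)} (hm : ‖m‖ ≤ 1)
    (hu : ‖u‖ ≤ 1) : ∫ x, gaussV d 1 m x * cosh ⟪x, u⟫ ≤ exp 1 := by
  have h_inner : ⟪m, u⟫ ^ 2 ≤ 1 :=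
    (sq_le_one_iff_abs_le_one _).2 <|
      (abs_real_inner_le_norm m u).trans (mul_le_one₀ hm (norm_nonneg u) hu)
  have h_norm : ‖u‖ ^ 2 ≤ 1 := pow_le_one₀ (norm_nonneg u) hu
  calc ∫ x, gaussV d 1 m x * cosh ⟪x, u⟫
      = exp (1 * ‖u‖ ^ 2 / 2) * cosh ⟪m, u⟫ := integral_gaussV_mul_cosh_inner one_pos m u
    _ ≤ exp (1 * ‖u‖ ^ 2 / 2) * exp (⟪m, u⟫ ^ 2 / 2) := by
        gcongr
        exact cosh_le_exp_half_sq _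
    _ = exp (1 * ‖u‖ ^ 2 / 2 + ⟪m, u⟫ ^ 2 / 2) := (exp_add _ _).symm
    _ ≤ exp 1 := exp_le_exp.2 (by linarith)

lemma gaussV_sub_gaussV_zero_le (hv : 0 < v) (m x : EuclideanSpace ℝ (Fin d)) :
    gaussV d v m x - gaussV d v 0 x ≤ gaussV d v m x * (⟪x, m⟫ / v) := by
  have h_shift : gaussV d v 0 x = gaussV d v m x * exp (-(⟪x, m⟫ / v) + ‖m‖ ^ 2 / (2 * v)) := by
    unfold gaussV
    rw [mul_assoc _ (exp _), ← exp_add, norm_sub_sq_real x m, sub_zero]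
    congr 2
    field_simp
    ring
  have h_exp : 1 - ⟪x, m⟫ / v ≤ exp (-(⟪x, m⟫ / v) + ‖m‖ ^ 2 / (2 * v)) := by
    have h_sq : 0 ≤ ‖m‖ ^ 2 / (2 * v) := by positivity
    linarith [add_one_le_exp (-(⟪x, m⟫ / v) + ‖m‖ ^ 2 / (2 * v))]
  have h_mul := mul_le_mul_of_nonneg_left h_exp (gaussV_nonneg hv.le m x)
  rw [h_shift]
  linarith

end Gaussian

section WeightedAverage

lemma one_le_of_sum_ne_zero {K : ℕ} {w : Fin K → ℝ} (hs : ∑ k, w k ≠ 0) : 1 ≤ K :=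
  have ⟨k, _⟩ := exists_ne_zero_of_sum_ne_zero hs
  k.pos

lemma sum_mul_le_of_forall_le {ι : Type*} [Fintype ι] {p f : ι → ℝ} {M : ℝ} (hp : ∀ i, 0 ≤ p i)
    (hs : ∑ i, p i = 1) (hf : ∀ i, f i ≤ M) : ∑ i, p i * f i ≤ M :=
  (convex_Iic M).sum_mem (fun i _ => hp i) hs fun i _ => hf i

end WeightedAverage

section HyperbolicCosine

lemma exp_abs_le_two_mul_cosh (t : ℝ) : exp |t| ≤ 2 * cosh t := by
  rw [cosh_eq, mul_div_cancel₀ _ two_ne_zero]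
  exact exp_abs_le t

lemma abs_le_two_mul_cosh (t : ℝ) : |t| ≤ 2 * cosh t := by
  linarith [add_one_le_exp |t|, exp_abs_le_two_mul_cosh t]

lemma one_le_exp_neg_mul_cosh {s t : ℝ} (h : s ≤ |t|) : 1 ≤ 2 * exp (-s) * cosh t :=
  calc 1 = exp (-s) * exp s := by rw [← exp_add, neg_add_cancel, exp_zero]
    _ ≤ exp (-s) * (2 * cosh t) := by
        gcongr
        exact (exp_le_exp.2 h).trans (exp_abs_le_two_mul_cosh t)
    _ = 2 * exp (-s) * cosh t := by ring

end HyperbolicCosine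

section Mixture

variable {d K : ℕ} {w : Fin K → ℝ}

lemma mixDensity_nonneg (hw : ∀ k, 0 ≤ w k) (μ : Fin K → EuclideanSpace ℝ (Fin d)) (abar : ℝ)
    (x : EuclideanSpace ℝ (Fin d)) : 0 ≤ mixDensity d K w μ abar x :=
  sum_nonneg fun k _ => mul_nonneg (hw k) (gaussV_nonneg zero_le_one _ x)

lemma integrable_mixDensity (w : Fin K → ℝ) (μ : Fin K → EuclideanSpace ℝ (Fin d)) (abar : ℝ) :
    Integrable (mixDensity d K w μ abar) :=
  integrable_finsetSum _ fun _ _ => (integrable_gaussV one_pos _).const_mul _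

lemma integral_mixDensity (w : Fin K → ℝ) (μ : Fin K → EuclideanSpace ℝ (Fin d)) (abar : ℝ) :
    ∫ x, mixDensity d K w μ abar x = ∑ k, w k := by
  unfold mixDensity
  rw [integral_finsetSum _ fun k _ => (integrable_gaussV one_pos _).const_mul _]
  simp_rw [integral_const_mul, integral_gaussV one_pos, mul_one]

lemma mixDensity_sub_gaussV_zero_le (hw : ∀ k, 0 ≤ w k) (hs : ∑ k, w k = 1)
    (μ : Fin K → EuclideanSpace ℝ (Fin d)) (abar : ℝ) (x : EuclideanSpace ℝ (Fin d)) :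
    mixDensity d K w μ abar x - gaussV d 1 0 x ≤
      ∑ k, w k * (gaussV d 1 (√abar • μ k) x * |⟪x, √abar • μ k⟫|) := by
  calc mixDensity d K w μ abar x - gaussV d 1 0 x
      = ∑ k, w k * (gaussV d 1 (√abar • μ k) x - gaussV d 1 0 x) := by
        simp_rw [mixDensity, mul_sub]
        rw [sum_sub_distrib, ← sum_mul, hs, one_mul]
    _ ≤ ∑ k, w k * (gaussV d 1 (√abar • μ k) x * |⟪x, √abar • μ k⟫|) := by
        gcongr with k
        · exact hw k
        · refine (gaussV_sub_gaussV_zero_le one_pos _ x).trans ?_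
          rw [div_one]
          exact mul_le_mul_of_nonneg_left (le_abs_self _) (gaussV_nonneg zero_le_one _ x)

lemma postWeight_nonneg (hw : ∀ k, 0 ≤ w k) (μ : Fin K → EuclideanSpace ℝ (Fin d)) (abar : ℝ)
    (k : Fin K) (x : EuclideanSpace ℝ (Fin d)) : 0 ≤ postWeight d K w μ abar k x :=
  div_nonneg (mul_nonneg (hw k) (exp_pos _).le)
    (sum_nonneg fun i _ => mul_nonneg (hw i) (exp_pos _).le)

lemma sum_postWeight (hw : ∀ k, 0 ≤ w k) (hs : ∑ k, w k ≠ 0) (μ : Fin K → EuclideanSpace ℝ (Fin d))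
    (abar : ℝ) (x : EuclideanSpace ℝ (Fin d)) : ∑ k, postWeight d K w μ abar k x = 1 := by
  obtain ⟨j, -, hj⟩ := exists_ne_zero_of_sum_ne_zero hs
  have h_pos : 0 < ∑ i, w i * exp (-‖x - √abar • μ i‖ ^ 2 / 2) :=
    sum_pos' (fun i _ => mul_nonneg (hw i) (exp_pos _).le)
      ⟨j, mem_univ j, mul_pos ((hw j).lt_of_ne' hj) (exp_pos _)⟩
  unfold postWeight
  rw [← sum_div, div_self h_pos.ne']

end Mixture

section TypicalSet

variable {d K : ℕ} {w : Fin K → ℝ} {μ : Fin K → EuclideanSpace ℝ (Fin d)} {abar a r B : ℝ}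
  {x : EuclideanSpace ℝ (Fin d)}

/-- The posterior mean `√ᾱ_t ∑_k π_k^{(t)}(x) μ_k` of the component mean given `X_t = x`, through
which the score (Tweedie's formula), its Jacobian and `ζ` are estimated. -/
noncomputable def postMean (d K : ℕ) (w : Fin K → ℝ) (μ : Fin K → EuclideanSpace ℝ (Fin d))
    (abar : ℝ) (x : EuclideanSpace ℝ (Fin d)) : EuclideanSpace ℝ (Fin d) :=
  √abar • ∑ k, postWeight d K w μ abar k x • μ k

lemma postMean_eq_sum (w : Fin K → ℝ) (μ : Fin K → EuclideanSpace ℝ (Fin d)) (abar : ℝ)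
    (x : EuclideanSpace ℝ (Fin d)) :
    postMean d K w μ abar x = ∑ k, postWeight d K w μ abar k x • √abar • μ k := by
  rw [postMean, smul_sum]
  exact sum_congr rfl fun k _ => smul_comm _ _ _

lemma norm_postMean_le (hw : ∀ k, 0 ≤ w k) (hs : ∑ k, w k ≠ 0) (hr : ∀ k, ‖√abar • μ k‖ ≤ r) :
    ‖postMean d K w μ abar x‖ ≤ r := by
  rw [postMean_eq_sum, ← mem_closedBall_zero_iff]
  exact (convex_closedBall _ _).sum_mem (fun k _ => postWeight_nonneg hw μ abar k x)
    (sum_postWeight hw hs μ abar x) fun k _ => mem_closedBall_zero_iff.2 (hr k)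

lemma abs_inner_postMean_le (hw : ∀ k, 0 ≤ w k) (hs : ∑ k, w k ≠ 0)
    (hB : ∀ k, |⟪x, √abar • μ k⟫| ≤ B) : |⟪x, postMean d K w μ abar x⟫| ≤ B := by
  rw [postMean_eq_sum, inner_sum, abs_le, ← Set.mem_Icc]
  simp_rw [inner_smul_right x (√abar • _)]
  exact (convex_Icc _ _).sum_mem (fun k _ => postWeight_nonneg hw μ abar k x)
    (sum_postWeight hw hs μ abar x) fun k _ => abs_le.1 (hB k)

lemma sum_postWeight_mul_norm_sub_sq (hw : ∀ k, 0 ≤ w k) (hs : ∑ k, w k ≠ 0)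
    (μ : Fin K → EuclideanSpace ℝ (Fin d)) (abar : ℝ) (x : EuclideanSpace ℝ (Fin d)) :
    ∑ k, postWeight d K w μ abar k x * ‖x - √abar • μ k‖ ^ 2 =
      ‖x‖ ^ 2 - 2 * ⟪x, postMean d K w μ abar x⟫ +
        ∑ k, postWeight d K w μ abar k x * ‖√abar • μ k‖ ^ 2 := by
  have h_inner : ⟪x, postMean d K w μ abar x⟫ =
      ∑ k, postWeight d K w μ abar k x * ⟪x, √abar • μ k⟫ := by
    rw [postMean_eq_sum, inner_sum]
    exact sum_congr rfl fun k _ => inner_smul_right _ _ _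
  rw [h_inner, mul_sum, ← one_mul (‖x‖ ^ 2), ← sum_postWeight hw hs μ abar x, sum_mul,
    ← sum_sub_distrib, ← sum_add_distrib]
  refine sum_congr rfl fun k _ => ?_
  rw [norm_sub_sq_real]
  ring

lemma sum_postWeight_mul_norm_sq_le (hw : ∀ k, 0 ≤ w k) (hs : ∑ k, w k ≠ 0)
    (hr : ∀ k, ‖√abar • μ k‖ ≤ r) :
    ∑ k, postWeight d K w μ abar k x * ‖√abar • μ k‖ ^ 2 ≤ r ^ 2 :=
  sum_mul_le_of_forall_le (fun k => postWeight_nonneg hw μ abar k x)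
    (sum_postWeight hw hs μ abar x) fun k => pow_le_pow_left₀ (norm_nonneg _) (hr k) 2

lemma neg_le_norm_sub_sq_sub_sum (hw : ∀ k, 0 ≤ w k) (hs : ∑ k, w k ≠ 0)
    (hr : ∀ k, ‖√abar • μ k‖ ≤ r) (hB : ∀ k, |⟪x, √abar • μ k⟫| ≤ B) (k : Fin K) :
    -(4 * B + r ^ 2) ≤ ‖x - √abar • μ k‖ ^ 2 -
      ∑ i, postWeight d K w μ abar i x * ‖x - √abar • μ i‖ ^ 2 := by
  rw [sum_postWeight_mul_norm_sub_sq hw hs, norm_sub_sq_real]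
  linarith [sum_postWeight_mul_norm_sq_le (x := x) hw hs hr, sq_nonneg ‖√abar • μ k‖,
    (abs_le.1 (hB k)).2, (abs_le.1 (abs_inner_postMean_le hw hs hB)).1]

lemma neg_le_inner_gmmScore_sum (hw : ∀ k, 0 ≤ w k) (hs : ∑ k, w k ≠ 0)
    (hr : ∀ k, ‖√abar • μ k‖ ≤ r) (hB : ∀ k, |⟪x, √abar • μ k⟫| ≤ B) (k : Fin K) :
    -(2 * B + r ^ 2) ≤ ⟪gmmScore d K w μ abar x,
      ∑ i, postWeight d K w μ abar i x • (√abar • (μ i - μ k))⟫ := by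
  have h_score : gmmScore d K w μ abar x = -x + postMean d K w μ abar x := rfl
  have h_sum : ∑ i, postWeight d K w μ abar i x • (√abar • (μ i - μ k)) =
      postMean d K w μ abar x - √abar • μ k := by
    simp_rw [smul_sub, sum_sub_distrib]
    rw [← sum_smul, sum_postWeight hw hs, one_smul, postMean_eq_sum]
  have h_cross : ⟪postMean d K w μ abar x, √abar • μ k⟫ ≤ r ^ 2 :=
    calc ⟪postMean d K w μ abar x, √abar • μ k⟫
        ≤ ‖postMean d K w μ abar x‖ * ‖√abar • μ k‖ := real_inner_le_norm _ _
      _ ≤ r * r := mul_le_mul (norm_postMean_le hw hs hr) (hr k) (norm_nonneg _)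
          ((norm_nonneg _).trans (hr k))
      _ = r ^ 2 := (sq r).symm
  rw [h_score, h_sum, inner_sub_right, inner_add_left, inner_add_left, inner_neg_left,
    inner_neg_left, real_inner_self_eq_norm_sq]
  linarith [sq_nonneg ‖postMean d K w μ abar x‖, (abs_le.1 (hB k)).1,
    (abs_le.1 (abs_inner_postMean_le hw hs hB)).2]

lemma neg_zeta_le (hw : ∀ k, 0 ≤ w k) (hs : ∑ k, w k ≠ 0) (ha : 0 < a) (ha1 : a ≤ 1)
    (hr : ∀ k, ‖√abar • μ k‖ ≤ r) (hB : ∀ k, |⟪x, √abar • μ k⟫| ≤ B) (k : Fin K) :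
    -zeta d K w μ abar a k x ≤ (1 - a) / a ^ 2 * (6 * B + 2 * r ^ 2) := by
  have hB0 : 0 ≤ B := (abs_nonneg _).trans (hB k)
  have h_coeff : (1 - a ^ 2) / (2 * a ^ 2) = (1 - a) / a ^ 2 * ((1 + a) / 2) := by
    field_simp
    ring
  have h_rate : 0 ≤ (1 - a) / a ^ 2 := div_nonneg (by linarith) (by positivity)
  have h_dist := mul_le_mul_of_nonneg_left (neg_le_norm_sub_sq_sub_sum hw hs hr hB k)
    (mul_nonneg h_rate (show 0 ≤ (1 + a) / 2 by linarith))
  have h_score := mul_le_mul_of_nonneg_left (neg_le_inner_gmmScore_sum hw hs hr hB k) h_rate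
  have h_half : (1 - a) / a ^ 2 * ((1 + a) / 2) * (4 * B + r ^ 2) ≤
      (1 - a) / a ^ 2 * (4 * B + r ^ 2) :=
    mul_le_mul_of_nonneg_right (mul_le_of_le_one_right h_rate (by linarith)) (by positivity)
  rw [zeta, h_coeff]
  linarith

lemma trace_one_add_gmmJac (habar : 0 ≤ abar) (w : Fin K → ℝ) (μ : Fin K → EuclideanSpace ℝ (Fin d))
    (x : EuclideanSpace ℝ (Fin d)) :
    Matrix.trace (1 + gmmJac d K w μ abar x) =
      ∑ k, postWeight d K w μ abar k x * ‖√abar • μ k‖ ^ 2 - ‖postMean d K w μ abar x‖ ^ 2 := by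
  have h_second : ∑ k, postWeight d K w μ abar k x * ‖√abar • μ k‖ ^ 2 =
      ∑ i, abar * ∑ k, postWeight d K w μ abar k x * (μ k i * μ k i) := by
    simp_rw [mul_sum]
    rw [sum_comm]
    refine sum_congr rfl fun k _ => ?_
    rw [norm_smul, mul_pow, norm_eq_abs, sq_abs, sq_sqrt habar, EuclideanSpace.real_norm_sq_eq,
      mul_sum, mul_sum]
    exact sum_congr rfl fun i _ => by ring
  have h_mean : ‖postMean d K w μ abar x‖ ^ 2 =
      ∑ i, abar * ((∑ k, postWeight d K w μ abar k x * μ k i) *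
        ∑ k, postWeight d K w μ abar k x * μ k i) := by
    rw [postMean, norm_smul, mul_pow, norm_eq_abs, sq_abs, sq_sqrt habar,
      EuclideanSpace.real_norm_sq_eq, mul_sum]
    simp only [WithLp.ofLp_sum, WithLp.ofLp_smul, Finset.sum_apply, Pi.smul_apply, smul_eq_mul, sq]
  rw [h_second, h_mean, ← sum_sub_distrib, Matrix.trace]
  refine sum_congr rfl fun i _ => ?_
  simp only [Matrix.diag_apply, Matrix.add_apply, Matrix.one_apply_eq, gmmJac, Matrix.of_apply,
    if_true]
  ring

lemma trace_one_add_gmmJac_le (hw : ∀ k, 0 ≤ w k) (hs : ∑ k, w k ≠ 0) (habar : 0 ≤ abar)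
    (hr : ∀ k, ‖√abar • μ k‖ ≤ r) : Matrix.trace (1 + gmmJac d K w μ abar x) ≤ r ^ 2 := by
  rw [trace_one_add_gmmJac habar]
  linarith [sum_postWeight_mul_norm_sq_le (x := x) hw hs hr, sq_nonneg ‖postMean d K w μ abar x‖]

lemma mem_Eset_of_abs_inner_le {T : ℕ} {C₁ C₂ : ℝ} (hw : ∀ k, 0 ≤ w k) (hs : ∑ k, w k ≠ 0)
    (habar : 0 ≤ abar) (ha : 0 < a) (ha1 : a ≤ 1) (hr : ∀ k, ‖√abar • μ k‖ ≤ r)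
    (hC₁ : r ^ 2 ≤ C₁ * log (K * T))
    (hC₂ : (1 - a) / a ^ 2 * (6 * B + 2 * r ^ 2) ≤ C₂ * (1 - a) ^ 2 * log (K * T) ^ 2)
    (hB : ∀ k, |⟪x, √abar • μ k⟫| ≤ B) : x ∈ Eset d K T w μ abar a C₁ C₂ :=
  ⟨(trace_one_add_gmmJac_le hw hs habar hr).trans hC₁,
    sum_mul_le_of_forall_le (fun k => postWeight_nonneg hw μ abar k x)
      (sum_postWeight hw hs μ abar x) fun k =>
      exp_le_exp.2 ((neg_zeta_le hw hs ha ha1 hr hB k).trans hC₂)⟩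

end TypicalSet

section TerminalDefect

variable {d K T : ℕ} {w : Fin K → ℝ} {μ : Fin K → EuclideanSpace ℝ (Fin d)} {αbar α : ℕ → ℝ}
  {C₁ C₂ r s : ℝ} {x : EuclideanSpace ℝ (Fin d)}

lemma DeltaFn_nonneg (d K T : ℕ) (w : Fin K → ℝ) (μ : Fin K → EuclideanSpace ℝ (Fin d))
    (αbar α : ℕ → ℝ) (C₁ C₂ : ℝ) (t : ℕ) (x : EuclideanSpace ℝ (Fin d)) :
    0 ≤ DeltaFn d K T w μ αbar α C₁ C₂ t x :=
  sub_nonneg.2 (min_le_left _ _)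

lemma DeltaFn_self_of_mem (hx : x ∈ Eset d K T w μ (αbar T) (α T) C₁ C₂) :
    DeltaFn d K T w μ αbar α C₁ C₂ T x =
      max 0 (mixDensity d K w μ (αbar T) x - gaussV d 1 0 x) := by
  rw [DeltaFn, Nat.sub_self, pbarMinus, Set.indicator_of_mem hx, ← max_sub_sub_left, sub_self]

lemma DeltaFn_self_le_mixDensity (hw : ∀ k, 0 ≤ w k) (μ : Fin K → EuclideanSpace ℝ (Fin d))
    (αbar α : ℕ → ℝ) (C₁ C₂ : ℝ) (x : EuclideanSpace ℝ (Fin d)) :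
    DeltaFn d K T w μ αbar α C₁ C₂ T x ≤ mixDensity d K w μ (αbar T) x := by
  rw [DeltaFn, Nat.sub_self, pbarMinus]
  exact sub_le_self _ (le_min (mixDensity_nonneg hw μ _ x)
    (Set.indicator_nonneg (fun y _ => gaussV_nonneg zero_le_one 0 y) x))

lemma integral_DeltaFn_self_le_sum (hw : ∀ k, 0 ≤ w k) (μ : Fin K → EuclideanSpace ℝ (Fin d))
    (αbar α : ℕ → ℝ) (C₁ C₂ : ℝ) : ∫ x, DeltaFn d K T w μ αbar α C₁ C₂ T x ≤ ∑ k, w k := by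
  rw [← integral_mixDensity w μ (αbar T)]
  exact integral_mono_of_nonneg (.of_forall (DeltaFn_nonneg d K T w μ αbar α C₁ C₂ T))
    (integrable_mixDensity w μ _) (.of_forall (DeltaFn_self_le_mixDensity hw μ αbar α C₁ C₂))

/-- The factor by which the `k`-th component of `p_{X_T}` is multiplied to dominate `Δ_T`, for slabs
of half-width `s r`: the first term bounds `|⟪x, √ᾱ_T μ_k⟫|`, and the sum exceeds `1` as soon as `x`
leaves one of the slabs. -/
noncomputable def defectFactor (d K : ℕ) (μ : Fin K → EuclideanSpace ℝ (Fin d)) (abar r s : ℝ)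
    (k : Fin K) (x : EuclideanSpace ℝ (Fin d)) : ℝ :=
  2 * r * cosh ⟪x, r⁻¹ • √abar • μ k⟫ + ∑ j, 2 * exp (-s) * cosh ⟪x, r⁻¹ • √abar • μ j⟫

lemma abs_inner_le_defectFactor (hr : 0 < r) (μ : Fin K → EuclideanSpace ℝ (Fin d)) (abar s : ℝ)
    (k : Fin K) (x : EuclideanSpace ℝ (Fin d)) :
    |⟪x, √abar • μ k⟫| ≤ defectFactor d K μ abar r s k x := by
  have h_tail : 0 ≤ ∑ j, 2 * exp (-s) * cosh ⟪x, r⁻¹ • √abar • μ j⟫ :=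
    sum_nonneg fun j _ => by positivity
  calc |⟪x, √abar • μ k⟫| = r * |⟪x, r⁻¹ • √abar • μ k⟫| := by
        rw [inner_smul_right x (√abar • μ k), abs_mul, abs_of_pos (inv_pos.2 hr),
          mul_inv_cancel_left₀ hr.ne']
    _ ≤ r * (2 * cosh ⟪x, r⁻¹ • √abar • μ k⟫) := by
        gcongr
        exact abs_le_two_mul_cosh _
    _ ≤ defectFactor d K μ abar r s k x := by
        rw [defectFactor]
        linarith

lemma one_le_defectFactor (hr : 0 < r) {abar : ℝ} {j : Fin K} (hj : s * r ≤ |⟪x, √abar • μ j⟫|)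
    (k : Fin K) : 1 ≤ defectFactor d K μ abar r s k x := by
  have h_slab : s ≤ |⟪x, r⁻¹ • √abar • μ j⟫| := by
    rw [inner_smul_right x (√abar • μ j), abs_mul, abs_of_pos (inv_pos.2 hr), le_inv_mul_iff₀ hr,
      mul_comm]
    exact hj
  have h_head : 0 ≤ 2 * r * cosh ⟪x, r⁻¹ • √abar • μ k⟫ := by positivity
  calc 1 ≤ 2 * exp (-s) * cosh ⟪x, r⁻¹ • √abar • μ j⟫ := one_le_exp_neg_mul_cosh h_slab
    _ ≤ ∑ j, 2 * exp (-s) * cosh ⟪x, r⁻¹ • √abar • μ j⟫ :=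
        single_le_sum (f := fun j => 2 * exp (-s) * cosh ⟪x, r⁻¹ • √abar • μ j⟫)
          (fun i _ => by positivity) (mem_univ j)
    _ ≤ defectFactor d K μ abar r s k x := le_add_of_nonneg_left h_head

lemma DeltaFn_self_le_sum_defectFactor (hw : ∀ k, 0 ≤ w k) (hs : ∑ k, w k = 1) (hr : 0 < r)
    (hE : (∀ k, |⟪x, √(αbar T) • μ k⟫| ≤ s * r) → x ∈ Eset d K T w μ (αbar T) (α T) C₁ C₂) :
    DeltaFn d K T w μ αbar α C₁ C₂ T x ≤
      ∑ k, w k * (gaussV d 1 (√(αbar T) • μ k) x * defectFactor d K μ (αbar T) r s k x) := by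
  have h_abs := abs_inner_le_defectFactor hr μ (αbar T) s (x := x)
  by_cases h_slab : ∀ k, |⟪x, √(αbar T) • μ k⟫| ≤ s * r
  · rw [DeltaFn_self_of_mem (hE h_slab)]
    refine max_le (sum_nonneg fun k _ => mul_nonneg (hw k) <|
      mul_nonneg (gaussV_nonneg zero_le_one _ x) ((abs_nonneg _).trans (h_abs k))) ?_
    refine (mixDensity_sub_gaussV_zero_le hw hs μ (αbar T) x).trans ?_
    gcongr with k
    · exact hw k
    · exact gaussV_nonneg zero_le_one _ x
    · exact h_abs k
  · push Not at h_slab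
    obtain ⟨j, hj⟩ := h_slab
    refine (DeltaFn_self_le_mixDensity hw μ αbar α C₁ C₂ x).trans ?_
    unfold mixDensity
    gcongr with k
    · exact hw k
    · exact le_mul_of_one_le_right (gaussV_nonneg zero_le_one _ x) (one_le_defectFactor hr hj.le k)

lemma gaussV_mul_defectFactor (m : EuclideanSpace ℝ (Fin d)) (μ : Fin K → EuclideanSpace ℝ (Fin d))
    (abar r s : ℝ) (k : Fin K) (x : EuclideanSpace ℝ (Fin d)) :
    gaussV d 1 m x * defectFactor d K μ abar r s k x =
      2 * r * (gaussV d 1 m x * cosh ⟪x, r⁻¹ • √abar • μ k⟫) +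
        ∑ j, 2 * exp (-s) * (gaussV d 1 m x * cosh ⟪x, r⁻¹ • √abar • μ j⟫) := by
  rw [defectFactor, mul_add, mul_sum, mul_left_comm]
  exact congrArg _ (sum_congr rfl fun j _ => mul_left_comm _ _ _)

lemma integrable_gaussV_mul_defectFactor (m : EuclideanSpace ℝ (Fin d))
    (μ : Fin K → EuclideanSpace ℝ (Fin d)) (abar r s : ℝ) (k : Fin K) :
    Integrable fun x => gaussV d 1 m x * defectFactor d K μ abar r s k x := by
  simp_rw [gaussV_mul_defectFactor]
  exact ((integrable_gaussV_mul_cosh_inner one_pos _ _).const_mul _).add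
    (integrable_finsetSum _ fun j _ => (integrable_gaussV_mul_cosh_inner one_pos _ _).const_mul _)

lemma integral_gaussV_mul_defectFactor_le {m : EuclideanSpace ℝ (Fin d)} {abar : ℝ} (hr : 0 < r)
    (hm : ‖m‖ ≤ 1) (hμ : ∀ k, ‖√abar • μ k‖ ≤ r) (s : ℝ) (k : Fin K) :
    ∫ x, gaussV d 1 m x * defectFactor d K μ abar r s k x ≤ 2 * exp 1 * (r + K * exp (-s)) := by
  have h_unit (j : Fin K) : ‖r⁻¹ • √abar • μ j‖ ≤ 1 := by
    rw [norm_smul, norm_inv, norm_of_nonneg hr.le]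
    exact inv_mul_le_one_of_le₀ (hμ j) hr.le
  have h_cosh (j : Fin K) : ∫ x, gaussV d 1 m x * cosh ⟪x, r⁻¹ • √abar • μ j⟫ ≤ exp 1 :=
    integral_gaussV_one_mul_cosh_inner_le hm (h_unit j)
  have h_int (c : ℝ) (j : Fin K) :
      Integrable fun x => c * (gaussV d 1 m x * cosh ⟪x, r⁻¹ • √abar • μ j⟫) :=
    (integrable_gaussV_mul_cosh_inner one_pos _ _).const_mul c
  simp_rw [gaussV_mul_defectFactor]
  rw [integral_add (h_int _ k) (integrable_finsetSum _ fun j _ => h_int _ j),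
    integral_finsetSum _ fun j _ => h_int _ j]
  simp_rw [integral_const_mul]
  calc _ ≤ 2 * r * exp 1 + ∑ _j : Fin K, 2 * exp (-s) * exp 1 := by
        gcongr with j
        · exact h_cosh k
        · exact h_cosh j
    _ = 2 * exp 1 * (r + K * exp (-s)) := by
        rw [sum_const, card_univ, Fintype.card_fin, nsmul_eq_mul]
        ring

theorem integral_DeltaFn_self_le (hw : ∀ k, 0 ≤ w k) (hs : ∑ k, w k = 1) (hr : 0 < r) (hr1 : r ≤ 1)
    (hμ : ∀ k, ‖√(αbar T) • μ k‖ ≤ r)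
    (hE : ∀ x, (∀ k, |⟪x, √(αbar T) • μ k⟫| ≤ s * r) →
      x ∈ Eset d K T w μ (αbar T) (α T) C₁ C₂) :
    ∫ x, DeltaFn d K T w μ αbar α C₁ C₂ T x ≤ 2 * exp 1 * (r + K * exp (-s)) := by
  have h_int (k : Fin K) : Integrable fun x =>
      w k * (gaussV d 1 (√(αbar T) • μ k) x * defectFactor d K μ (αbar T) r s k x) :=
    (integrable_gaussV_mul_defectFactor _ μ _ r s k).const_mul _
  calc ∫ x, DeltaFn d K T w μ αbar α C₁ C₂ T x
      ≤ ∫ x, ∑ k, w k * (gaussV d 1 (√(αbar T) • μ k) x * defectFactor d K μ (αbar T) r s k x) :=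
        integral_mono_of_nonneg (.of_forall (DeltaFn_nonneg d K T w μ αbar α C₁ C₂ T))
          (integrable_finsetSum _ fun k _ => h_int k)
          (.of_forall fun x => DeltaFn_self_le_sum_defectFactor hw hs hr (hE x))
    _ = ∑ k, w k * ∫ x, gaussV d 1 (√(αbar T) • μ k) x * defectFactor d K μ (αbar T) r s k x := by
        rw [integral_finsetSum _ fun k _ => h_int k]
        simp_rw [integral_const_mul]
    _ ≤ 2 * exp 1 * (r + K * exp (-s)) :=
        sum_mul_le_of_forall_le hw hs fun k =>
          integral_gaussV_mul_defectFactor_le hr ((hμ k).trans hr1) hμ s k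

end TerminalDefect

section Schedule

lemma one_sub_div_sq_le {y q c : ℝ} (hq : 0 < q) (hqy : q ≤ y) (hyc : y ≤ c) :
    (1 - (1 + y)⁻¹) / (1 + y)⁻¹ ^ 2 ≤ (1 + c) ^ 3 / q * (1 - (1 + y)⁻¹) ^ 2 := by
  have hy : 0 < y := hq.trans_le hqy
  calc (1 - (1 + y)⁻¹) / (1 + y)⁻¹ ^ 2 = y * (1 + y) := by
        field_simp
        ring
    _ = (1 + y) ^ 3 / y * (1 - (1 + y)⁻¹) ^ 2 := by
        field_simp
        ring
    _ ≤ (1 + c) ^ 3 / q * (1 - (1 + y)⁻¹) ^ 2 := by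
        have hc : 0 < c := hy.trans_le hyc
        gcongr

lemma schedule_increment_mem_Icc {T : ℕ} (hT : 2 ≤ T) {b c : ℝ} (hb0 : 0 ≤ b) (hb : b ≤ 1 / 2)
    (hc : 0 ≤ c) : c * (log T / T) * (1 - b) ∈ Set.Icc (c / (4 * T)) c := by
  have hT' : (2 : ℝ) ≤ T := by exact_mod_cast hT
  have h_log : 1 / 2 ≤ log T := by
    linarith [log_two_gt_d9, log_le_log two_pos hT']
  have h_ratio : log T / T ≤ 1 := (div_le_one (by positivity)).2 (log_le_self (by positivity))
  constructor
  · calc c / (4 * T) = c * (1 / 2 / T) * (1 / 2) := by ring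
      _ ≤ c * (log T / T) * (1 - b) := by
          gcongr
          linarith
  · calc c * (log T / T) * (1 - b) ≤ c * 1 * 1 := by
          gcongr
          · linarith
          · linarith
      _ = c := by ring

lemma one_half_le_log_mul {K T : ℕ} (hK : 1 ≤ K) (hT : 2 ≤ T) : 1 / 2 ≤ log (K * T) := by
  have hKT : (2 : ℝ) ≤ K * T := by exact_mod_cast Nat.le_mul_of_pos_left T hK |>.trans' hT
  linarith [log_two_gt_d9, log_le_log two_pos hKT]

lemma mul_exp_neg_four_mul_log_le {K T : ℕ} (hK : 1 ≤ K) (hT : 1 ≤ T) :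
    K * exp (-(4 * log (K * T))) ≤ 1 / (T : ℝ) ^ 3 := by
  have hK' : (1 : ℝ) ≤ K := by exact_mod_cast hK
  have hT' : (1 : ℝ) ≤ T := by exact_mod_cast hT
  have h_exp : exp (-(4 * log (K * T))) = ((K * T : ℝ) ^ 4)⁻¹ := by
    rw [exp_neg, show (4 : ℝ) = (4 : ℕ) by norm_num, exp_nat_mul, exp_log (by positivity)]
  calc K * exp (-(4 * log (K * T))) = 1 / (T : ℝ) ^ 3 * (1 / (K ^ 3 * T)) := by
        rw [h_exp]
        field_simp
    _ ≤ 1 / (T : ℝ) ^ 3 * 1 := by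
        gcongr
        exact (div_le_one (by positivity)).2 (one_le_mul_of_one_le_of_one_le (one_le_pow₀ hK') hT')
    _ = 1 / (T : ℝ) ^ 3 := mul_one _

lemma norm_sqrt_rpow_smul_le {E : Type*} [SeminormedAddCommGroup E] [NormedSpace ℝ E] {T : ℝ}
    (hT : 1 ≤ T) {m : E} {p q : ℝ} {n : ℕ} (hm : ‖m‖ ≤ T ^ p) (hq : 2 * p + 2 * n ≤ q) :
    ‖√(T ^ (-q)) • m‖ ≤ 1 / T ^ n := by
  have hT0 : 0 < T := one_pos.trans_le hT
  calc ‖√(T ^ (-q)) • m‖ = T ^ (-q * (1 / 2)) * ‖m‖ := by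
        rw [norm_smul, norm_of_nonneg (sqrt_nonneg _), sqrt_eq_rpow, ← rpow_mul hT0.le]
    _ ≤ T ^ (-q * (1 / 2)) * T ^ p := by gcongr
    _ = T ^ (-q * (1 / 2) + p) := (rpow_add hT0 _ _).symm
    _ ≤ T ^ (-n : ℝ) := rpow_le_rpow_of_exponent_le hT (by linarith)
    _ = 1 / T ^ n := by rw [rpow_neg hT0.le, rpow_natCast, one_div]

lemma rpow_neg_le_one_half {T c : ℝ} (hT : 2 ≤ T) (hc : 1 ≤ c) : T ^ (-c) ≤ 1 / 2 :=
  calc T ^ (-c) ≤ T ^ (-1 : ℝ) := rpow_le_rpow_of_exponent_le (by linarith) (by linarith)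
    _ = 1 / T := by rw [rpow_neg_one, one_div]
    _ ≤ 1 / 2 := by gcongr

end Schedule

section TerminalStep

variable {d K T : ℕ} {w : Fin K → ℝ} {μ : Fin K → EuclideanSpace ℝ (Fin d)}

lemma slab_zeta_bound_le {L T r : ℝ} (hL : 1 / 2 ≤ L) (hT : 2 ≤ T) (hr0 : 0 ≤ r) (hr : r ≤ 1 / T) :
    6 * (4 * L * r) + 2 * r ^ 2 ≤ 54 * L ^ 2 / T := by
  have h_half : r ≤ 1 / 2 := hr.trans (by gcongr)
  calc 6 * (4 * L * r) + 2 * r ^ 2 = (24 * L + 2 * r) * r := by ring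
    _ ≤ 54 * L ^ 2 * (1 / T) := by
        gcongr
        nlinarith
    _ = 54 * L ^ 2 / T := by ring

lemma mem_Eset_of_abs_inner_le_log {abar a c r C₁ C₂ : ℝ} (hw : ∀ k, 0 ≤ w k) (hs : ∑ k, w k ≠ 0)
    (hT : 2 ≤ T) (habar : 0 < abar) (habar_half : abar ≤ 1 / 2) (hc : 0 < c)
    (ha : a = abar / (abar + c * (log T / T) * abar * (1 - abar)))
    (hC₁ : 1 ≤ C₁) (hC₂ : 216 * (1 + c) ^ 3 / c ≤ C₂) (hr0 : 0 ≤ r) (hr : r ≤ 1 / T)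
    (hμ : ∀ k, ‖√abar • μ k‖ ≤ r) {x : EuclideanSpace ℝ (Fin d)}
    (hx : ∀ k, |⟪x, √abar • μ k⟫| ≤ 4 * log (K * T) * r) :
    x ∈ Eset d K T w μ abar a C₁ C₂ := by
  have hT' : (2 : ℝ) ≤ T := by exact_mod_cast hT
  have hL : 1 / 2 ≤ log (K * T) := one_half_le_log_mul (one_le_of_sum_ne_zero hs) hT
  obtain ⟨hy_lower, hy_upper⟩ := schedule_increment_mem_Icc hT habar.le habar_half hc.le
  set y := c * (log T / T) * (1 - abar) with hy
  have hq : 0 < c / (4 * T) := by positivity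
  have hy0 : 0 < y := hq.trans_le hy_lower
  have h_rate : a = (1 + y)⁻¹ := by
    rw [ha, show abar + c * (log T / T) * abar * (1 - abar) = abar * (1 + y) by rw [hy]; ring,
      div_mul_cancel_left₀ habar.ne']
  have h_trace : r ^ 2 ≤ C₁ * log (K * T) := by
    have h_half : r ≤ 1 / 2 := hr.trans (by gcongr)
    nlinarith
  have h_zeta : (1 - a) / a ^ 2 * (6 * (4 * log (K * T) * r) + 2 * r ^ 2) ≤
      C₂ * (1 - a) ^ 2 * log (K * T) ^ 2 :=
    calc (1 - a) / a ^ 2 * (6 * (4 * log (K * T) * r) + 2 * r ^ 2)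
        ≤ (1 + c) ^ 3 / (c / (4 * T)) * (1 - a) ^ 2 * (54 * log (K * T) ^ 2 / T) := by
          rw [h_rate]
          gcongr
          · exact one_sub_div_sq_le hq hy_lower hy_upper
          · exact slab_zeta_bound_le hL hT' hr0 hr
      _ = 216 * (1 + c) ^ 3 / c * (1 - a) ^ 2 * log (K * T) ^ 2 := by
          field_simp
          ring
      _ ≤ C₂ * (1 - a) ^ 2 * log (K * T) ^ 2 := by gcongr
  exact mem_Eset_of_abs_inner_le hw hs habar.le (h_rate ▸ by positivity)
    (h_rate ▸ inv_le_one_of_one_le₀ (by linarith)) hμ h_trace h_zeta hx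

theorem stmt3_general {cR c₀ c₁ C₁ C₂ : ℝ} (hc₀ : 1 ≤ c₀) (hc₀R : 2 * cR + 6 ≤ c₀) (hc₁ : 0 < c₁)
    (hC₁ : 1 ≤ C₁) (hC₂ : 216 * (1 + c₁) ^ 3 / c₁ ≤ C₂) (hT : 1 ≤ T)
    (hw : ∀ k, 0 ≤ w k) (hs : ∑ k, w k = 1) (hμ : ∀ k, ‖μ k‖ ≤ (T : ℝ) ^ cR)
    {αbar α : ℕ → ℝ} (hαbar : αbar T = (T : ℝ) ^ (-c₀))
    (hα : 2 ≤ T → α T = αbar T / (αbar T + c₁ * (log T / T) * αbar T * (1 - αbar T))) :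
    ∫ x, DeltaFn d K T w μ αbar α C₁ C₂ T x ≤ 4 * exp 1 / (T : ℝ) ^ 3 := by
  obtain rfl | hT2 := hT.eq_or_lt
  · calc ∫ x, DeltaFn d K 1 w μ αbar α C₁ C₂ 1 x ≤ ∑ k, w k :=
          integral_DeltaFn_self_le_sum hw μ αbar α C₁ C₂
      _ ≤ 4 * exp 1 / ((1 : ℕ) : ℝ) ^ 3 := by
          rw [hs, Nat.cast_one, one_pow, div_one]
          linarith [one_le_exp zero_le_one]
  have hT1 : (1 : ℝ) ≤ T := by exact_mod_cast hT
  have hs0 : ∑ k, w k ≠ 0 := hs ▸ one_ne_zero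
  have h_norm (k : Fin K) : ‖√(αbar T) • μ k‖ ≤ 1 / (T : ℝ) ^ 3 :=
    hαbar ▸ norm_sqrt_rpow_smul_le hT1 (hμ k) (by norm_num; exact hc₀R)
  have h_slab (x : EuclideanSpace ℝ (Fin d))
      (hx : ∀ k, |⟪x, √(αbar T) • μ k⟫| ≤ 4 * log (K * T) * (1 / (T : ℝ) ^ 3)) :
      x ∈ Eset d K T w μ (αbar T) (α T) C₁ C₂ :=
    mem_Eset_of_abs_inner_le_log hw hs0 hT2 (hαbar ▸ by positivity)
      (hαbar ▸ rpow_neg_le_one_half (by exact_mod_cast hT2) hc₀) hc₁ (hα hT2) hC₁ hC₂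
      (by positivity) (by gcongr; exact le_self_pow₀ hT1 three_ne_zero) h_norm hx
  calc ∫ x, DeltaFn d K T w μ αbar α C₁ C₂ T x
      ≤ 2 * exp 1 * (1 / (T : ℝ) ^ 3 + K * exp (-(4 * log (K * T)))) :=
        integral_DeltaFn_self_le hw hs (by positivity)
          (div_le_one_of_le₀ (one_le_pow₀ hT1) (by positivity)) h_norm h_slab
    _ ≤ 2 * exp 1 * (1 / (T : ℝ) ^ 3 + 1 / (T : ℝ) ^ 3) := by
        gcongr
        exact mul_exp_neg_four_mul_log_le (one_le_of_sum_ne_zero hs0) hT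
    _ = 4 * exp 1 / (T : ℝ) ^ 3 := by ring

end TerminalStep

/-- Lemma 2. For the auxiliary reverse process, the function
`Δ_T(x) := p_{X_T^GMM}(x) − p_{Ȳ_T}(x)` satisfies `∫_{ℝ^d} Δ_T(x) dx ≤ C T^{−3}`
for some absolute constant `C > 0`. -/
theorem stmt3 :
    ∀ cR : ℝ, 0 < cR →
      ∃ c₀₀ c₁₀ : ℝ, 0 < c₀₀ ∧ 0 < c₁₀ ∧
        ∀ c₀ c₁ : ℝ, c₀₀ ≤ c₀ → c₁₀ ≤ c₁ → 4 < c₁ / c₀ →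
          ∃ C₁ C₂ C : ℝ, 0 < C₁ ∧ 0 < C₂ ∧ 0 < C ∧
            ∀ (d K T : ℕ), 1 ≤ d → 1 ≤ K → 1 ≤ T →
              ∀ (w : Fin K → ℝ) (μ : Fin K → EuclideanSpace ℝ (Fin d)),
                (∀ k, w k ∈ Set.Ioo (0 : ℝ) 1) → (∑ k, w k = 1) →
                (∀ k, ‖μ k‖ ≤ (T : ℝ) ^ cR) →
                ∀ (αbar α : ℕ → ℝ),
                  αbar T = (T : ℝ) ^ (-c₀) →
                  (∀ t : ℕ, 2 ≤ t → t ≤ T →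
                    αbar (t - 1) = αbar t + c₁ * (Real.log T / T) * αbar t * (1 - αbar t)) →
                  (∀ t : ℕ, 2 ≤ t → t ≤ T → α t = αbar t / αbar (t - 1)) →
                  α 1 = αbar 1 →
                  (∫ x, DeltaFn d K T w μ αbar α C₁ C₂ T x) ≤ C / (T : ℝ) ^ 3 := by
  intro cR hcR
  refine ⟨2 * cR + 6, 1, by positivity, one_pos, fun c₀ c₁ hc₀ hc₁ _ => ?_⟩
  refine ⟨1, 216 * (1 + c₁) ^ 3 / c₁, 4 * exp 1, one_pos, by positivity, by positivity, ?_⟩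
  intro d K T _ _ hT w μ hw hs hμ αbar α hαbar hrec hα _
  exact stmt3_general (by linarith) hc₀ (by linarith) le_rfl le_rfl hT (fun k => (hw k).1.le) hs
    hμ hαbar fun hT2 => hrec T hT2 le_rfl ▸ hα T hT2 le_rfl
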